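/- For every n ≥ 1, the square matrix M, indexed by the nonempty subsets of Fin n, with entries M(s,t) = 1 if s ∩ t ≠ ∅ and M(s,t) = 0 otherwise, is invertible over ℚ (equivalently, its determinant is nonzero). Equivalently, the family of vectors d_s ∈ ({nonempty subsets of Fin n} → ℝ) given by (d_s)(t) = 1 if s ∩ t ≠ ∅ and 0 otherwise, where s ranges over all nonempty subsets of Fin n, is a basis of this (2ⁿ − 1)-dimensional space. -/

import Mathlib

/-!
A kernel vector `v` satisfies `∑_{t ∩ s ≠ ∅} v t = 0` for every nonempty `s`, and trivially for
`s = ∅`. Since `t ⊆ u` iff `t` misses `uᶜ`, subtracting the equation for `uᶜ` from the one for the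
full set gives `∑_{t ⊆ u} v t = 0` for every `u`. This system is unitriangular with respect to
inclusion, so `v = 0` by strong induction.
-/

/-- The 0/1 matrix indexed by nonempty subsets of `Fin n`, with entry `1` at `(s, t)`
iff `s ∩ t ≠ ∅`, has nonzero determinant over `ℚ` (i.e. it is invertible); equivalently,
the subsystem depolarizing gauge vectors `d_s` form a basis of the `(2ⁿ - 1)`-dimensional
space. -/
theorem intersection_indicator_matrix_det_ne_zero (n : ℕ) (hn : 1 ≤ n) :
    (Matrix.of (fun s t : {s : Finset (Fin n) // s.Nonempty} =>
        if (s.1 ∩ t.1).Nonempty then (1 : ℚ) else 0)).det ≠ 0 := by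
  intro hdet
  obtain ⟨v, hv0, hv⟩ := Matrix.exists_mulVec_eq_zero_iff.mpr hdet
  apply hv0
  have meet_sum : ∀ s : Finset (Fin n),
      ∑ t : {s : Finset (Fin n) // s.Nonempty},
        (if (s ∩ t.1).Nonempty then v t else 0) = 0 := by
    intro s
    rcases s.eq_empty_or_nonempty with rfl | hs
    · simp
    · have h := congrFun hv ⟨s, hs⟩
      simpa [Matrix.mulVec, dotProduct] using h
  have subset_sum : ∀ u : Finset (Fin n),
      ∑ t : {s : Finset (Fin n) // s.Nonempty}, (if t.1 ⊆ u then v t else 0) = 0 := by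
    intro u
    have h := congrArg₂ (· - ·) (meet_sum Finset.univ) (meet_sum uᶜ)
    simp only [sub_zero, ← Finset.sum_sub_distrib] at h
    refine (Finset.sum_congr rfl fun t _ => ?_).trans h
    have hmiss : (uᶜ ∩ t.1).Nonempty ↔ ¬ t.1 ⊆ u := by
      simp only [Finset.Nonempty, Finset.mem_inter, Finset.mem_compl, Finset.not_subset]
      exact exists_congr fun _ => and_comm
    by_cases h : t.1 ⊆ u <;> simp [hmiss, h, t.2]
  have key : ∀ (u : Finset (Fin n)) (hu : u.Nonempty), v ⟨u, hu⟩ = 0 := by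
    intro u
    induction u using Finset.strongInduction with
    | H u ih =>
      intro hu
      have h := subset_sum u
      rw [Finset.sum_eq_single ⟨u, hu⟩] at h
      · simpa using h
      · intro t _ hne
        split_ifs with hsub
        · exact ih t.1 (hsub.ssubset_of_ne fun he => hne (Subtype.ext he)) t.2
        · rfl
      · simp
  funext t
  exact key t.1 t.2
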